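/- arXiv:2106.15956 — 2 statements merged into one kernel-verified Lean document; each statement's English description precedes it below -/
import Mathlib

section
/- Let J⊂K with J≠K and U_J≠∅ be given and suppose one of the hypotheses (b), (d1b), (J) is satisfied. Then there exists an open neighbourhood N_J of X_{fJ} in X_f such that R^J defines a diffeomorphism R_J from N_J onto the open subset R^J(N_J) of X_0, with (R_J)^{-1}(χ) = χ + Y_J(Lχ)·f((R_J)^{-1}(χ)) for every χ∈R^J(N_J); moreover N_J = {χ + Y_J(Lχ)·f((R_J)^{-1}(χ)) : χ∈R^J(N_J)} is an almost graph over X_0. -/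
open Set

noncomputable section

/-- The compact interval `[-r,0]`. -/
abbrev Icc0 (r : ℝ) : Set ℝ := Set.Icc (-r) 0

/-- Extension of a continuous map on `[-r,0]` to `ℝ`, by the value `0` outside. -/
def extFun {r : ℝ} {E : Type*} [TopologicalSpace E] [Zero E] (φ : C(Icc0 r, E)) : ℝ → E :=
  fun t => if h : t ∈ Icc0 r then φ ⟨t, h⟩ else 0

section extlemmas

variable {r : ℝ} {E : Type*} [NormedAddCommGroup E] [NormedSpace ℝ E]

lemma extFun_add (φ ψ : C(Icc0 r, E)) : extFun (φ + ψ) = extFun φ + extFun ψ := by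
  funext t; by_cases h : t ∈ Icc0 r <;> simp [extFun, h]

lemma extFun_zero : extFun (0 : C(Icc0 r, E)) = 0 := by
  funext t; by_cases h : t ∈ Icc0 r <;> simp [extFun, h]

lemma extFun_smul (c : ℝ) (φ : C(Icc0 r, E)) : extFun (c • φ) = c • extFun φ := by
  funext t; by_cases h : t ∈ Icc0 r <;> simp [extFun, h]

end extlemmas

/-- The space `C¹([-r,0],E)`, realized as the closed subspace of pairs `(φ, φ')` in
`C([-r,0],E) × C([-r,0],E)` such that `φ` is differentiable on `[-r,0]` with derivative `φ'`. -/
def C1sub (r : ℝ) (E : Type*) [NormedAddCommGroup E] [NormedSpace ℝ E] :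
    Submodule ℝ (C(Icc0 r, E) × C(Icc0 r, E)) where
  carrier := {p | ∀ t ∈ Icc0 r, HasDerivWithinAt (extFun p.1) (extFun p.2 t) (Icc0 r) t}
  add_mem' := by
    intro p q hp hq t ht
    have h := (hp t ht).add (hq t ht)
    have e1 : extFun (p + q).1 = fun s => extFun p.1 s + extFun q.1 s := by
      simp [Prod.fst_add, extFun_add]; rfl
    have e2 : extFun (p + q).2 t = extFun p.2 t + extFun q.2 t := by
      simp [Prod.snd_add, extFun_add]
    rw [e1, e2]; exact h
  zero_mem' := by
    intro t ht
    have e1 : extFun (0 : C(Icc0 r, E) × C(Icc0 r, E)).1 = fun _ : ℝ => (0 : E) := by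
      simp [extFun_zero]; rfl
    have e2 : extFun (0 : C(Icc0 r, E) × C(Icc0 r, E)).2 t = 0 := by
      simp [extFun_zero]
    rw [e1, e2]; exact hasDerivWithinAt_const _ _ _
  smul_mem' := by
    intro c p hp t ht
    have h := (hp t ht).const_smul c
    have e1 : extFun (c • p).1 = fun s => c • extFun p.1 s := by
      simp [Prod.smul_fst, extFun_smul]; rfl
    have e2 : extFun (c • p).2 t = c • extFun p.2 t := by
      simp [Prod.smul_snd, extFun_smul]
    rw [e1, e2]; exact h

/-- The Banach space `C¹([-r,0],E)`. -/
abbrev C1 (r : ℝ) (E : Type*) [NormedAddCommGroup E] [NormedSpace ℝ E] := ↥(C1sub r E)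

section C1ops

variable {r : ℝ} {E : Type*} [NormedAddCommGroup E] [NormedSpace ℝ E]

/-- Evaluation `φ(t)` of `φ ∈ C¹([-r,0],E)` (extended by `0` outside `[-r,0]`). -/
def evC (φ : C1 r E) (t : ℝ) : E := extFun φ.1.1 t

/-- Evaluation `φ'(t)` of the derivative of `φ ∈ C¹([-r,0],E)`. -/
def dvC (φ : C1 r E) (t : ℝ) : E := extFun φ.1.2 t

end C1ops

/-- The continuous linear map `ℝ → (Fin n → ℝ)` sending `x` to the vector `x·e_ν`. -/
def sCLM (n : ℕ) (ν : Fin n) : ℝ →L[ℝ] (Fin n → ℝ) :=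
  ContinuousLinearMap.pi (fun j => if j = ν then ContinuousLinearMap.id ℝ ℝ else 0)

/-- `ψ · e_ν` for a continuous map `ψ`. -/
def CMsingle {r : ℝ} {n : ℕ} (ν : Fin n) (φ : C(Icc0 r, ℝ)) : C(Icc0 r, Fin n → ℝ) :=
  ⟨fun t => sCLM n ν (φ t), (sCLM n ν).continuous.comp φ.continuous⟩

lemma extFun_CMsingle {r : ℝ} {n : ℕ} (ν : Fin n) (φ : C(Icc0 r, ℝ)) (t : ℝ) :
    extFun (CMsingle ν φ) t = sCLM n ν (extFun φ t) := by
  by_cases h : t ∈ Icc0 r <;> simp [extFun, CMsingle, h]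

/-- `ψ · e_ν ∈ C¹([-r,0],ℝⁿ)` for a scalar function `ψ ∈ C¹([-r,0],ℝ)`. -/
def singleC1 {r : ℝ} {n : ℕ} (ν : Fin n) (φ : C1 r ℝ) : C1 r (Fin n → ℝ) :=
  ⟨(CMsingle ν φ.1.1, CMsingle ν φ.1.2), by
    intro t ht
    have h := ((sCLM n ν).hasFDerivAt).comp_hasDerivWithinAt t (φ.2 t ht)
    have e1 : extFun (CMsingle ν φ.1.1) = (sCLM n ν) ∘ (extFun φ.1.1) := by
      funext s; exact extFun_CMsingle ν φ.1.1 s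
    rw [show (CMsingle ν φ.1.1, CMsingle ν φ.1.2).1 = CMsingle ν φ.1.1 from rfl,
      show (CMsingle ν φ.1.1, CMsingle ν φ.1.2).2 = CMsingle ν φ.1.2 from rfl,
      e1, extFun_CMsingle]
    exact h⟩

/-- The linear map `ℝⁿ → C¹([-r,0],ℝⁿ)`, `x ↦ Σ_ν x_ν ψ_ν · e_ν` (the map `Y·x`). -/
def Ymap {r : ℝ} {n : ℕ} (ψ : Fin n → C1 r ℝ) : (Fin n → ℝ) →ₗ[ℝ] C1 r (Fin n → ℝ) where
  toFun x := ∑ ν, x ν • singleC1 ν (ψ ν)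
  map_add' x y := by simp [add_smul, Finset.sum_add_distrib]
  map_smul' c x := by simp [smul_smul, Finset.smul_sum]

/-- The closed subspace `X₀ = {φ ∈ C¹ : φ'(0) = 0}`. -/
def X0sub (r : ℝ) (n : ℕ) : Submodule ℝ (C1 r (Fin n → ℝ)) where
  carrier := {φ | dvC φ 0 = 0}
  add_mem' := by
    intro φ ψ hφ hψ
    have : dvC (φ + ψ) 0 = dvC φ 0 + dvC ψ 0 := by
      simp [dvC, extFun_add]
    rw [Set.mem_setOf_eq] at *
    rw [this, hφ, hψ, add_zero]
  zero_mem' := by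
    show dvC (0 : C1 r (Fin n → ℝ)) 0 = 0
    simp [dvC, extFun_zero]
  smul_mem' := by
    intro c φ hφ
    have : dvC (c • φ) 0 = c • dvC φ 0 := by simp [dvC, extFun_smul]
    rw [Set.mem_setOf_eq] at *
    rw [this, hφ, smul_zero]

/-- The projection-like map `R φ = φ − Y·φ'(0)`. -/
def RKmap {r : ℝ} {n : ℕ} (ψ : Fin n → C1 r ℝ) (φ : C1 r (Fin n → ℝ)) : C1 r (Fin n → ℝ) :=
  φ - Ymap ψ (dvC φ 0)

section diffeos

variable {E : Type*} [NormedAddCommGroup E] [NormedSpace ℝ E]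
variable {E' : Type*} [NormedAddCommGroup E'] [NormedSpace ℝ E']

/-- `f` defines a `C¹`-diffeomorphism from `s` onto `t`: `f` is continuously differentiable
on `s`, injective on `s`, maps `s` onto `t`, and has a continuously differentiable inverse. -/
def IsC1DiffeoOn (f : E → E') (s : Set E) (t : Set E') : Prop :=
  ContDiffOn ℝ 1 f s ∧ Set.InjOn f s ∧ f '' s = t ∧
    ∃ g : E' → E, ContDiffOn ℝ 1 g t ∧ Set.InvOn g f s t

/-- The tangent cone of `X ⊆ E` at `x`: all velocities `c'(0)` of continuously differentiable
curves in `X` through `x`. -/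
def tangentSet (X : Set E) (x : E) : Set E :=
  {v | ∃ (c : ℝ → E) (ε : ℝ), 0 < ε ∧ ContDiffOn ℝ 1 c (Set.Ioo (-ε) ε) ∧
      (∀ s ∈ Set.Ioo (-ε) ε, c s ∈ X) ∧ c 0 = x ∧ HasDerivWithinAt c v (Set.Ioo (-ε) ε) 0}

/-- `X` is a continuously differentiable submanifold of codimension `m` of `E`. -/
def IsC1SubmanifoldCodim (X : Set E) (m : ℕ) : Prop :=
  ∀ x ∈ X, ∃ (O : Set E) (Φ : E → E) (H Q : Submodule ℝ E),
    IsOpen O ∧ x ∈ O ∧ IsClosed (H : Set E) ∧ IsCompl H Q ∧ Module.finrank ℝ Q = m ∧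
    IsOpen (Φ '' O) ∧ IsC1DiffeoOn Φ O (Φ '' O) ∧ Φ '' (X ∩ O) = (H : Set E) ∩ (Φ '' O)

/-- `X` is a continuously differentiable submanifold of `E`. -/
def IsC1Submanifold (X : Set E) : Prop :=
  ∀ x ∈ X, ∃ (O : Set E) (Φ : E → E) (H : Submodule ℝ E),
    IsOpen O ∧ x ∈ O ∧ IsClosed (H : Set E) ∧
    IsOpen (Φ '' O) ∧ IsC1DiffeoOn Φ O (Φ '' O) ∧ Φ '' (X ∩ O) = (H : Set E) ∩ (Φ '' O)

/-- `A` is an almost graph over `H`. -/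
def IsAlmostGraphOver (A : Set E) (H : Set E) : Prop :=
  ∃ (dm : Set E) (α : E → E), dm ⊆ H ∧ ContDiffOn ℝ 1 α dm ∧
    (∀ ζ ∈ dm ∩ A, α ζ = 0) ∧ (∀ ζ ∈ dm \ A, α ζ ∉ H) ∧
    IsC1DiffeoOn (fun ζ => ζ + α ζ) dm A

end diffeos

/-- The data of the delay differential system
`x'(t) = g(x(t-d_1(Lx_t)),…,x(t-d_kk(Lx_t)))`. -/
structure Setting (r : ℝ) (n kk : ℕ) (F : Type*) [NormedAddCommGroup F] [NormedSpace ℝ F] where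
  /-- The continuous linear map `L : C([-r,0],ℝⁿ) → F`. -/
  L : C(Icc0 r, Fin n → ℝ) →L[ℝ] F
  /-- The open set `W ⊆ F`. -/
  W : Set F
  Wopen : IsOpen W
  /-- The delay functions `d_k : W → [0,r]`. -/
  d : Fin kk → F → ℝ
  d_smooth : ∀ k, ContDiffOn ℝ 1 (d k) W
  d_mem : ∀ k, ∀ w ∈ W, d k w ∈ Set.Icc (0:ℝ) r
  /-- The open set `V ⊆ (ℝⁿ)^kk`. -/
  V : Set (Fin kk → Fin n → ℝ)
  Vopen : IsOpen V
  /-- The right hand side function `g : V → ℝⁿ`. -/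
  g : (Fin kk → Fin n → ℝ) → Fin n → ℝ
  g_smooth : ContDiffOn ℝ 1 g V

namespace Setting

variable {r : ℝ} {n kk : ℕ} {F : Type*} [NormedAddCommGroup F] [NormedSpace ℝ F]
variable (S : Setting r n kk F)

/-- `L` applied to (the `C⁰`-part of) `φ ∈ C¹`. -/
def Lof (φ : C1 r (Fin n → ℝ)) : F := S.L φ.1.1

/-- `φ̂ = (φ(-d_1(Lφ)),…,φ(-d_kk(Lφ)))`. -/
def hat (φ : C1 r (Fin n → ℝ)) : Fin kk → Fin n → ℝ := fun k => evC φ (-(S.d k (S.Lof φ)))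

/-- The domain `U = {φ ∈ C¹ : Lφ ∈ W, φ̂ ∈ V}`. -/
def U : Set (C1 r (Fin n → ℝ)) := {φ | S.Lof φ ∈ S.W ∧ S.hat φ ∈ S.V}

/-- The right hand side `f(φ) = g(φ̂)`. -/
def fmap (φ : C1 r (Fin n → ℝ)) : Fin n → ℝ := S.g (S.hat φ)

/-- The solution manifold `X_f = {φ ∈ U : φ'(0) = f(φ)}`. -/
def Xf : Set (C1 r (Fin n → ℝ)) := {φ | φ ∈ S.U ∧ dvC φ 0 = S.fmap φ}

/-- `W_J = {w ∈ W : d_j(w)=0 for j∈J, d_k(w)>0 for k∉J}`. -/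
def WJ (J : Finset (Fin kk)) : Set F :=
  {w | w ∈ S.W ∧ (∀ j ∈ J, S.d j w = 0) ∧ ∀ k ∉ J, 0 < S.d k w}

/-- `W^J = {w ∈ W : d_k(w)>0 for k∉J}`. -/
def WupJ (J : Finset (Fin kk)) : Set F :=
  {w | w ∈ S.W ∧ ∀ k ∉ J, 0 < S.d k w}

/-- `U_J = U ∩ L⁻¹(W_J)`. -/
def UJ (J : Finset (Fin kk)) : Set (C1 r (Fin n → ℝ)) := {φ | φ ∈ S.U ∧ S.Lof φ ∈ S.WJ J}

/-- `U^J = U ∩ L⁻¹(W^J)`. -/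
def UupJ (J : Finset (Fin kk)) : Set (C1 r (Fin n → ℝ)) := {φ | φ ∈ S.U ∧ S.Lof φ ∈ S.WupJ J}

/-- `X_{fJ} = X_f ∩ U_J`. -/
def XfJ (J : Finset (Fin kk)) : Set (C1 r (Fin n → ℝ)) := S.Xf ∩ S.UJ J

/-- Hypothesis (b): `g` is bounded. -/
def HypB : Prop := ∃ M, ∀ v ∈ S.V, ‖S.g v‖ ≤ M

/-- Hypothesis (d1b): `d₁ = 0` on `W` and `g` is bounded on subsets of `V` with bounded
first component. -/
def HypD1B (hk : 0 < kk) : Prop :=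
  (∀ w ∈ S.W, S.d ⟨0, hk⟩ w = 0) ∧
  ∀ B : Set (Fin n → ℝ), Bornology.IsBounded B →
    Bornology.IsBounded (S.g '' {v | v ∈ S.V ∧ v ⟨0, hk⟩ ∈ B})

/-- The partial derivative `∂_{(k-1)n+ν} g_μ (φ̂)`. -/
def dgCoeff (φ : C1 r (Fin n → ℝ)) (k : Fin kk) (ν : Fin n) (μ : Fin n) : ℝ :=
  fderivWithin ℝ S.g S.V (S.hat φ) (Pi.single k (Pi.single ν 1)) μ

/-- The right hand side of the formula for `Df_μ(φ)χ`. -/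
def dFormula (φ χ : C1 r (Fin n → ℝ)) (μ : Fin n) : ℝ :=
  ∑ k, ∑ ν, S.dgCoeff φ k ν μ *
    (evC χ (-(S.d k (S.Lof φ))) ν -
      dvC φ (-(S.d k (S.Lof φ))) ν * fderivWithin ℝ (S.d k) S.W (S.Lof φ) (S.Lof χ))

/-- The map `R^J(φ) = φ − Y_J(Lφ)·φ'(0)` of Section 4 of the paper. -/
def RJmap (y : Fin n → F → C1 r ℝ) (φ : C1 r (Fin n → ℝ)) : C1 r (Fin n → ℝ) :=
  φ - Ymap (fun ν => y ν (S.Lof φ)) (dvC φ 0)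

end Setting


variable {r : ℝ} {n kk : ℕ} {F : Type*} [NormedAddCommGroup F] [NormedSpace ℝ F]
  [FiniteDimensional ℝ F]

/-!
`R^J` is the projection onto `X₀` along the leaves `χ + range (Y_J(Lχ))`, `χ ∈ X₀`, on which `L`
is constant. In the leaf coordinates `φ = χ + Y_J(Lχ) · x` the manifold `X_f` is the set of
solutions of the fixed point equation `x = f(χ + Y_J(Lχ) · x)`. On a leaf in `U_J` the map `f` is
constant, since no delay in `K ∖ J` sees the summand `Y_J(Lχ) · x`, which also vanishes at `0`.
Hence at `(χ, f(χ))` the right hand side has zero partial derivative in `x`. Nearby it is a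
contraction in `x` on balls centred at `f(χ)`, so that solutions are unique, and the implicit
function theorem makes them a `C¹` function of `χ`: near `X_{fJ}`, in leaf coordinates, `X_f` is a
graph over an open subset of `X₀`.
-/

section FiberContraction

open Metric Topology Filter
open scoped NNReal

variable {E P : Type*} [TopologicalSpace E]

/-- The points `(χ, x)` such that, for all `χ'` near `χ`, the fibre map `T (χ', ·)` is a contraction
on a ball of fixed radius about `c χ'`, where the ball about `c χ` contains `x`. Centring all balls
at `c` makes them nested, so that each fibre of the set contains at most one fixed point. -/
def fiberContractionSet [PseudoMetricSpace P] (T : E × P → P) (c : E → P) : Set (E × P) :=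
  {p | ∃ ρ > dist p.2 (c p.1), ∃ K < (1 : ℝ≥0),
    ∀ᶠ χ in 𝓝 p.1, LipschitzOnWith K (fun x => T (χ, x)) (ball (c χ) ρ)}

theorem isOpen_fst_preimage_inter_fiberContractionSet [PseudoMetricSpace P]
    {T : E × P → P} {c : E → P} {Ω : Set E} (hΩ : IsOpen Ω)
    (hc : ContinuousOn c Ω) : IsOpen (Prod.fst ⁻¹' Ω ∩ fiberContractionSet T c) := by
  refine isOpen_iff_mem_nhds.2 ?_
  rintro ⟨χ, x⟩ ⟨hχ, ρ, hρ, K, hK, hLip⟩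
  have hcχ : ContinuousAt c χ := hc.continuousAt (hΩ.mem_nhds hχ)
  have hdist : ContinuousAt (fun p : E × P => dist p.2 (c p.1)) (χ, x) :=
    continuousAt_snd.dist (ContinuousAt.comp' hcχ continuousAt_fst)
  have hfst : Tendsto Prod.fst (𝓝 (χ, x)) (𝓝 χ) := continuousAt_fst
  filter_upwards [hfst.eventually (hΩ.mem_nhds hχ), hfst.eventually hLip.eventually_nhds,
    hdist.eventually_lt_const hρ] with p hpΩ hpLip hpρ
  exact ⟨hpΩ, ρ, hpρ, K, hK, hpLip⟩

theorem eq_of_mem_fiberContractionSet_of_fixed [MetricSpace P] {T : E × P → P}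
    {c : E → P} {χ : E} {x x' : P}
    (hx : (χ, x) ∈ fiberContractionSet T c) (hx' : (χ, x') ∈ fiberContractionSet T c)
    (hfix : T (χ, x) = x) (hfix' : T (χ, x') = x') : x = x' := by
  obtain ⟨ρ, hρ, K, hK, hLip⟩ := hx
  obtain ⟨ρ', hρ', K', hK', hLip'⟩ := hx'
  have eq_of_lipschitz : ∀ {ρ : ℝ} {K : ℝ≥0}, K < 1 → dist x (c χ) < ρ → dist x' (c χ) < ρ →
      LipschitzOnWith K (fun x => T (χ, x)) (ball (c χ) ρ) → x = x' := by
    intro ρ K hK hx hx' hLip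
    have hle := hLip.dist_le_mul x hx x' hx'
    simp only [hfix, hfix'] at hle
    exact dist_le_zero.1 (by nlinarith [dist_nonneg (x := x) (y := x'), NNReal.coe_lt_one.2 hK])
  rcases le_total ρ ρ' with h | h
  · exact eq_of_lipschitz hK' (hρ.trans_le h) hρ' hLip'.self_of_nhds
  · exact eq_of_lipschitz hK hρ (hρ'.trans_le h) hLip.self_of_nhds

end FiberContraction

section FixedPointGraph

open Metric Topology Filter
open scoped NNReal

variable {E P Q : Type*} [NormedAddCommGroup E] [NormedSpace ℝ E]
  [NormedAddCommGroup P] [NormedSpace ℝ P] [NormedAddCommGroup Q] [NormedSpace ℝ Q]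

theorem exists_contDiffAt_eventually_zero [CompleteSpace E] [CompleteSpace P] [CompleteSpace Q]
    {G : E × P → Q} {D : Set (E × P)} {χ : E} {x : P} (hD : D ∈ 𝓝 (χ, x))
    (hG : ContDiffAt ℝ 1 G (χ, x)) (hinv : (fderiv ℝ G (χ, x) ∘L .inr ℝ E P).IsInvertible)
    (h0 : G (χ, x) = 0) :
    ∃ ψ : E → P, ContDiffAt ℝ 1 ψ χ ∧ ∀ᶠ χ' in 𝓝 χ, (χ', ψ χ') ∈ D ∧ G (χ', ψ χ') = 0 := by
  have hψ : ContDiffAt ℝ 1 (hG.implicitFunction one_ne_zero hinv) χ :=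
    hG.contDiffAt_implicitFunction one_ne_zero hinv
  have hψχ : hG.implicitFunction one_ne_zero hinv χ = x :=
    hG.implicitFunction_apply_self one_ne_zero hinv
  have hmem : ∀ᶠ χ' in 𝓝 χ, (χ', hG.implicitFunction one_ne_zero hinv χ') ∈ D :=
    (continuousAt_id.prodMk hψ.continuousAt).preimage_mem_nhds (by simpa only [id, hψχ] using hD)
  refine ⟨_, hψ, ?_⟩
  filter_upwards [hmem, hG.eventually_apply_implicitFunction one_ne_zero hinv] with χ' hD' heq
  exact ⟨hD', heq.trans h0⟩

theorem exists_contDiffOn_zero_graph [CompleteSpace E] [CompleteSpace P] [CompleteSpace Q]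
    {G : E × P → Q} {D : Set (E × P)} (hD : IsOpen D) (hG : ContDiffOn ℝ 1 G D)
    (hinv : ∀ p ∈ D, G p = 0 → (fderiv ℝ G p ∘L .inr ℝ E P).IsInvertible)
    (hinj : InjOn Prod.fst {p ∈ D | G p = 0}) :
    ∃ (B : Set E) (X : E → P), IsOpen B ∧ ContDiffOn ℝ 1 X B ∧
      ∀ χ x, (χ, x) ∈ D ∧ G (χ, x) = 0 ↔ χ ∈ B ∧ X χ = x := by
  have hsol : ∀ χ, ∃ x, χ ∈ Prod.fst '' {p ∈ D | G p = 0} → (χ, x) ∈ D ∧ G (χ, x) = 0 := by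
    intro χ
    by_cases hχ : χ ∈ Prod.fst '' {p ∈ D | G p = 0}
    · obtain ⟨⟨_, x⟩, hx, rfl⟩ := hχ
      exact ⟨x, fun _ => hx⟩
    · exact ⟨0, fun h => absurd h hχ⟩
  choose X hX using hsol
  have eq_X : ∀ {χ x}, (χ, x) ∈ D → G (χ, x) = 0 → X χ = x := fun {χ x} hxD hx =>
    congrArg Prod.snd (hinj (hX χ ⟨(χ, x), ⟨hxD, hx⟩, rfl⟩) ⟨hxD, hx⟩ rfl)
  have hlocal : ∀ χ ∈ Prod.fst '' {p ∈ D | G p = 0}, ∃ ψ : E → P, ContDiffAt ℝ 1 ψ χ ∧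
      ∀ᶠ χ' in 𝓝 χ, (χ', ψ χ') ∈ D ∧ G (χ', ψ χ') = 0 := fun χ hχ => by
    obtain ⟨hχD, h0⟩ := hX χ hχ
    exact exists_contDiffAt_eventually_zero (hD.mem_nhds hχD) (hG.contDiffAt (hD.mem_nhds hχD))
      (hinv _ hχD h0) h0
  refine ⟨Prod.fst '' {p ∈ D | G p = 0}, X, ?_, ?_, ?_⟩
  · refine isOpen_iff_mem_nhds.2 fun χ hχ => ?_
    obtain ⟨ψ, -, hψ⟩ := hlocal χ hχ
    filter_upwards [hψ] with χ' h
    exact ⟨_, h, rfl⟩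
  · intro χ hχ
    obtain ⟨ψ, hψ, hsolψ⟩ := hlocal χ hχ
    refine (hψ.congr_of_eventuallyEq ?_).contDiffWithinAt
    filter_upwards [hsolψ] with χ' h
    exact eq_X h.1 h.2
  · refine fun χ x => ⟨fun h => ⟨⟨_, h, rfl⟩, eq_X h.1 h.2⟩, ?_⟩
    rintro ⟨hχ, rfl⟩
    exact hX χ hχ

variable {T : E × P → P} {c : E → P}

theorem hasFDerivAt_comp_prodMk_left {T' : E × P →L[ℝ] Q} {G : E × P → Q} {χ : E} {x : P}
    (hG : HasFDerivAt G T' (χ, x)) : HasFDerivAt (fun x => G (χ, x)) (T' ∘L .inr ℝ E P) x :=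
  HasFDerivAt.comp x hG (hasFDerivAt_prodMk_right χ x)

theorem norm_fderiv_comp_inr_lt_one {p : E × P} (hp : p ∈ fiberContractionSet T c)
    (hT : DifferentiableAt ℝ T p) : ‖fderiv ℝ T p ∘L .inr ℝ E P‖ < 1 := by
  obtain ⟨ρ, hρ, K, hK, hLip⟩ := hp
  refine lt_of_le_of_lt ?_ (NNReal.coe_lt_one.2 hK)
  exact (hasFDerivAt_comp_prodMk_left hT.hasFDerivAt).le_of_lipschitzOn
    (isOpen_ball.mem_nhds hρ) hLip.self_of_nhds

theorem isInvertible_fderiv_snd_sub_comp_inr [CompleteSpace P] {p : E × P}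
    (hT : DifferentiableAt ℝ T p) (hlt : ‖fderiv ℝ T p ∘L .inr ℝ E P‖ < 1) :
    (fderiv ℝ (fun q : E × P => q.2 - T q) p ∘L .inr ℝ E P).IsInvertible := by
  have hderiv : fderiv ℝ (fun q : E × P => q.2 - T q) p ∘L .inr ℝ E P =
      1 - fderiv ℝ T p ∘L .inr ℝ E P := by
    rw [(hasFDerivAt_snd.fun_sub hT.hasFDerivAt).fderiv]
    ext x
    simp
  rw [hderiv]
  obtain ⟨u, hu⟩ := isUnit_one_sub_of_norm_lt_one hlt
  exact ⟨ContinuousLinearEquiv.unitsEquiv ℝ P u, by rw [← hu]; rfl⟩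

theorem exists_nhds_lipschitzOnWith_snd {G : E × P → Q} {G' : E × P →L[ℝ] Q} {χ : E} {x : P}
    (hG : HasStrictFDerivAt G G' (χ, x)) {K : ℝ≥0} (hK : ‖G' ∘L .inr ℝ E P‖₊ < K) :
    ∃ u ∈ 𝓝 χ, ∃ v ∈ 𝓝 x, ∀ χ' ∈ u, LipschitzOnWith K (fun x => G (χ', x)) v := by
  obtain ⟨s, hs, happrox⟩ := hG.approximates_deriv_on_nhds (c := K - ‖G' ∘L .inr ℝ E P‖₊)
    (Or.inr (tsub_pos_of_lt hK))
  obtain ⟨u, hu, v, hv, huv⟩ := mem_nhds_prod_iff.1 hs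
  refine ⟨u, hu, v, hv, fun χ' hχ' => ?_⟩
  have hsub : ApproximatesLinearOn (fun x => G (χ', x)) (G' ∘L .inr ℝ E P) v
      (K - ‖G' ∘L .inr ℝ E P‖₊) := fun y hy z hz => by
    simpa using happrox (χ', y) (huv ⟨hχ', hy⟩) (χ', z) (huv ⟨hχ', hz⟩)
  have hLip := lipschitzOnWith_iff_restrict.2 hsub.lipschitz
  rwa [add_tsub_cancel_of_le hK.le] at hLip

theorem mk_mem_fiberContractionSet {ζ : E} (hT : ContDiffAt ℝ 1 T (ζ, c ζ))
    (hc : ContinuousAt c ζ) (hlt : ‖fderiv ℝ T (ζ, c ζ) ∘L .inr ℝ E P‖ < 1) :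
    (ζ, c ζ) ∈ fiberContractionSet T c := by
  obtain ⟨K, hAK, hK⟩ := exists_between (show ‖fderiv ℝ T (ζ, c ζ) ∘L .inr ℝ E P‖₊ < 1 from hlt)
  obtain ⟨u, hu, v, hv, hLip⟩ :=
    exists_nhds_lipschitzOnWith_snd (hT.hasStrictFDerivAt one_ne_zero) hAK
  obtain ⟨ε, hε, hball⟩ := Metric.mem_nhds_iff.1 hv
  refine ⟨ε / 2, by simpa using hε, K, hK, ?_⟩
  filter_upwards [hu, hc (ball_mem_nhds _ (half_pos hε))] with χ hχ hcχ
  exact (hLip χ hχ).mono ((ball_subset_ball' (by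
    have : dist (c χ) (c ζ) < ε / 2 := hcχ
    linarith)).trans hball)

theorem exists_contDiffOn_fixedPoint_graph [CompleteSpace E] [CompleteSpace P]
    {D : Set (E × P)} {Ω : Set E} (hD : IsOpen D) (hT : ContDiffOn ℝ 1 T D) (hΩ : IsOpen Ω)
    (hc : ContinuousOn c Ω) :
    ∃ D' ⊆ D, IsOpen D' ∧
      (∀ ζ ∈ Ω, (ζ, c ζ) ∈ D → ‖fderiv ℝ T (ζ, c ζ) ∘L .inr ℝ E P‖ < 1 → (ζ, c ζ) ∈ D') ∧
      ∃ (B : Set E) (X : E → P), IsOpen B ∧ ContDiffOn ℝ 1 X B ∧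
        ∀ χ x, (χ, x) ∈ D' ∧ T (χ, x) = x ↔ χ ∈ B ∧ X χ = x := by
  have hTD : ∀ p ∈ D, ContDiffAt ℝ 1 T p := fun p hp => hT.contDiffAt (hD.mem_nhds hp)
  have hopen : IsOpen (D ∩ (Prod.fst ⁻¹' Ω ∩ fiberContractionSet T c)) :=
    hD.inter (isOpen_fst_preimage_inter_fiberContractionSet hΩ hc)
  refine ⟨_, inter_subset_left, hopen, fun ζ hζ hζD hlt => ⟨hζD, hζ, ?_⟩, ?_⟩
  · exact mk_mem_fiberContractionSet (hTD _ hζD) (hc.continuousAt (hΩ.mem_nhds hζ)) hlt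
  have hinv : ∀ p ∈ D ∩ (Prod.fst ⁻¹' Ω ∩ fiberContractionSet T c), p.2 - T p = 0 →
      (fderiv ℝ (fun q : E × P => q.2 - T q) p ∘L .inr ℝ E P).IsInvertible := fun p hp _ =>
    have hTp : DifferentiableAt ℝ T p := (hTD p hp.1).differentiableAt one_ne_zero
    isInvertible_fderiv_snd_sub_comp_inr hTp (norm_fderiv_comp_inr_lt_one hp.2.2 hTp)
  have hinj : InjOn Prod.fst
      {p ∈ D ∩ (Prod.fst ⁻¹' Ω ∩ fiberContractionSet T c) | p.2 - T p = 0} := by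
    rintro ⟨χ, x⟩ ⟨hx, hx0⟩ ⟨_, x'⟩ ⟨hx', hx0'⟩ rfl
    rw [eq_of_mem_fiberContractionSet_of_fixed hx.2.2 hx'.2.2 (sub_eq_zero.1 hx0).symm
      (sub_eq_zero.1 hx0').symm]
  simpa only [sub_eq_zero, eq_comm (b := T _)] using exists_contDiffOn_zero_graph hopen
    (contDiffOn_snd.sub (hT.mono inter_subset_left)) hinv hinj

end FixedPointGraph

/-- A `C¹` family of right inverses `Y(w)` of `δ`, with values in the kernel of `Λ`. The affine
subspaces `φ + range (Y (Λ φ))` partition the open set `Λ⁻¹ domain` into leaves, along which `Λ` is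
constant and each of which meets `ker δ` in exactly one point. -/
structure RightInverseFamily {E P H : Type*} [NormedAddCommGroup E] [NormedSpace ℝ E]
    [NormedAddCommGroup P] [NormedSpace ℝ P] [NormedAddCommGroup H] [NormedSpace ℝ H]
    (δ : E →L[ℝ] P) (Λ : E →L[ℝ] H) where
  domain : Set H
  isOpen_domain : IsOpen domain
  toFun : H → P →L[ℝ] E
  contDiffOn_toFun : ContDiffOn ℝ 1 toFun domain
  δ_toFun : ∀ w ∈ domain, ∀ x, δ (toFun w x) = x
  Λ_toFun : ∀ w ∈ domain, ∀ x, Λ (toFun w x) = 0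

namespace RightInverseFamily

open Topology

variable {E P H : Type*} [NormedAddCommGroup E] [NormedSpace ℝ E]
  [NormedAddCommGroup P] [NormedSpace ℝ P] [NormedAddCommGroup H] [NormedSpace ℝ H]
  {δ : E →L[ℝ] P} {Λ : E →L[ℝ] H} (Y : RightInverseFamily δ Λ)

/-- The open set foliated by the leaves. -/
def source : Set E := Λ ⁻¹' Y.domain

/-- Translation by `p.2` along the leaf through `p.1`. -/
def shift (p : E × P) : E := p.1 + Y.toFun (Λ p.1) p.2

/-- Projection along the leaves onto `ker δ`. -/
def proj (φ : E) : E := φ - Y.toFun (Λ φ) (δ φ)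

/-- In the leaf coordinates `(Y.proj φ, δ φ)`, the graph of `X` over `B`. -/
def leafGraph (B : Set E) (X : E → P) : Set E :=
  {φ ∈ Y.source | Y.proj φ ∈ B ∧ X (Y.proj φ) = δ φ}

variable {Y}

theorem isOpen_source : IsOpen Y.source := Y.isOpen_domain.preimage Λ.continuous

theorem Λ_shift {p : E × P} (hp : p.1 ∈ Y.source) : Λ (Y.shift p) = Λ p.1 := by
  rw [shift, map_add, Y.Λ_toFun _ hp, add_zero]

theorem δ_shift {p : E × P} (hp : p.1 ∈ Y.source) : δ (Y.shift p) = δ p.1 + p.2 := by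
  rw [shift, map_add, Y.δ_toFun _ hp]

theorem shift_mem_source {p : E × P} (hp : p.1 ∈ Y.source) : Y.shift p ∈ Y.source := by
  rwa [source, mem_preimage, Λ_shift hp]

theorem proj_eq_shift (φ : E) : Y.proj φ = Y.shift (φ, -δ φ) := by
  rw [proj, shift, map_neg, sub_eq_add_neg]

theorem Λ_proj {φ : E} (hφ : φ ∈ Y.source) : Λ (Y.proj φ) = Λ φ := by
  rw [proj_eq_shift, Λ_shift hφ]

theorem δ_proj {φ : E} (hφ : φ ∈ Y.source) : δ (Y.proj φ) = 0 := by
  rw [proj_eq_shift, δ_shift hφ, add_neg_cancel]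

theorem shift_proj {φ : E} (hφ : φ ∈ Y.source) : Y.shift (Y.proj φ, δ φ) = φ := by
  rw [shift, Λ_proj hφ, proj, sub_add_cancel]

theorem proj_shift {p : E × P} (hp : p.1 ∈ Y.source) (h0 : δ p.1 = 0) :
    Y.proj (Y.shift p) = p.1 := by
  rw [proj, Λ_shift hp, δ_shift hp, h0, zero_add, shift, add_sub_cancel_right]

theorem contDiffOn_toFun_comp : ContDiffOn ℝ 1 (fun φ => Y.toFun (Λ φ)) Y.source :=
  Y.contDiffOn_toFun.comp Λ.contDiff.contDiffOn fun _ => id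

theorem contDiffOn_shift : ContDiffOn ℝ 1 Y.shift (Prod.fst ⁻¹' Y.source) :=
  contDiffOn_fst.add ((contDiffOn_toFun_comp.comp contDiffOn_fst fun _ => id).clm_apply
    contDiffOn_snd)

theorem contDiffOn_proj : ContDiffOn ℝ 1 Y.proj Y.source :=
  contDiffOn_id.sub (contDiffOn_toFun_comp.clm_apply δ.contDiff.contDiffOn)

section LeafGraph

variable {B : Set E} {X : E → P}

theorem leafGraph_subset_source : Y.leafGraph B X ⊆ Y.source := fun _ hφ => hφ.1

theorem shift_proj_of_mem_leafGraph {φ : E} (hφ : φ ∈ Y.leafGraph B X) :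
    Y.shift (Y.proj φ, X (Y.proj φ)) = φ := by
  rw [hφ.2.2, shift_proj hφ.1]

theorem shift_mem_leafGraph (hB : B ⊆ Y.source) {χ : E} (h0 : δ χ = 0) (hχ : χ ∈ B) :
    Y.shift (χ, X χ) ∈ Y.leafGraph B X := by
  have hproj : Y.proj (Y.shift (χ, X χ)) = χ := proj_shift (p := (χ, X χ)) (hB hχ) h0
  refine ⟨shift_mem_source (hB hχ), by rwa [hproj], ?_⟩
  rw [hproj, δ_shift (hB hχ), h0, zero_add]

theorem apply_shift_eq_of_leafGraph_subset {f : E → P} (hB : B ⊆ Y.source)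
    (hf : Y.leafGraph B X ⊆ {φ | δ φ = f φ}) {χ : E} (h0 : δ χ = 0) (hχ : χ ∈ B) :
    f (Y.shift (χ, X χ)) = X χ := by
  rw [← hf (shift_mem_leafGraph hB h0 hχ), δ_shift (hB hχ), h0, zero_add]

theorem image_proj_leafGraph (hB : B ⊆ Y.source) :
    Y.proj '' Y.leafGraph B X = {χ | δ χ = 0} ∩ B := by
  ext χ
  constructor
  · rintro ⟨φ, hφ, rfl⟩
    exact ⟨δ_proj hφ.1, hφ.2.1⟩
  · rintro ⟨h0, hχ⟩
    exact ⟨_, shift_mem_leafGraph hB h0 hχ, proj_shift (p := (χ, X χ)) (hB hχ) h0⟩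

theorem invOn_shift_proj_leafGraph (hB : B ⊆ Y.source) :
    InvOn (fun χ => Y.shift (χ, X χ)) Y.proj (Y.leafGraph B X) ({χ | δ χ = 0} ∩ B) :=
  ⟨fun _ hφ => shift_proj_of_mem_leafGraph hφ,
    fun χ hχ => proj_shift (p := (χ, X χ)) (hB hχ.2) hχ.1⟩

theorem contDiffOn_shift_graph (hB : B ⊆ Y.source) (hX : ContDiffOn ℝ 1 X B) :
    ContDiffOn ℝ 1 (fun χ => Y.shift (χ, X χ)) B :=
  contDiffOn_shift.comp (contDiffOn_id.prodMk hX) hB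

theorem isAlmostGraphOver_leafGraph (hB : B ⊆ Y.source) (hX : ContDiffOn ℝ 1 X B) :
    IsAlmostGraphOver (Y.leafGraph B X) {χ | δ χ = 0} := by
  have himage : (fun χ => Y.shift (χ, X χ)) '' ({χ | δ χ = 0} ∩ B) = Y.leafGraph B X := by
    rw [← image_proj_leafGraph (X := X) hB]
    exact (invOn_shift_proj_leafGraph hB).1.image_image
  refine ⟨{χ | δ χ = 0} ∩ B, fun χ => Y.toFun (Λ χ) (X χ), inter_subset_left,
    ((contDiffOn_toFun_comp.mono hB).clm_apply hX).mono inter_subset_right, ?_, ?_,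
    (contDiffOn_shift_graph hB hX).mono inter_subset_right, ?_, himage,
    Y.proj, contDiffOn_proj.mono leafGraph_subset_source, (invOn_shift_proj_leafGraph hB).symm⟩
  · rintro ζ ⟨⟨h0, -⟩, hζ⟩
    have hproj : Y.proj ζ = ζ := by rw [proj, h0, map_zero, sub_zero]
    have hX0 : X ζ = 0 := by rw [← h0, ← hζ.2.2, hproj]
    simp only [hX0, map_zero]
  · rintro ζ ⟨⟨h0, hζB⟩, hζ⟩ hmem
    have hX0 : X ζ = 0 := by rw [← Y.δ_toFun _ (hB hζB) (X ζ), hmem]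
    refine hζ ?_
    simpa only [shift, hX0, map_zero, add_zero] using shift_mem_leafGraph (X := X) hB h0 hζB
  · exact (invOn_shift_proj_leafGraph hB).2.injOn

end LeafGraph

variable {f : E → P} {U Z : Set E}

theorem isOpen_setOf_shift_mem (hU : IsOpen U) :
    IsOpen (Prod.fst ⁻¹' Y.source ∩ Y.shift ⁻¹' U) :=
  contDiffOn_shift.continuousOn.isOpen_inter_preimage (isOpen_source.preimage continuous_fst) hU

theorem isOpen_setOf_proj_mem {D : Set (E × P)} (hD : IsOpen D) :
    IsOpen (Y.source ∩ (fun φ => (Y.proj φ, δ φ)) ⁻¹' D) :=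
  (contDiffOn_proj.continuousOn.prodMk δ.continuous.continuousOn).isOpen_inter_preimage
    isOpen_source hD

theorem fderiv_comp_shift_comp_inr_eq_zero (hU : IsOpen U) (hf : ContDiffOn ℝ 1 f U) {ζ : E}
    {x : P} (hζ : ζ ∈ Y.source) (hx : Y.shift (ζ, x) ∈ U)
    (hconst : ∀ x, f (Y.shift (ζ, x)) = f ζ) :
    fderiv ℝ (fun p => f (Y.shift p)) (ζ, x) ∘L .inr ℝ E P = 0 := by
  have hdiff : DifferentiableAt ℝ (fun p => f (Y.shift p)) (ζ, x) :=
    ((hf.contDiffAt (hU.mem_nhds hx)).comp (ζ, x) (contDiffOn_shift.contDiffAt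
      ((isOpen_source.preimage continuous_fst).mem_nhds hζ))).differentiableAt one_ne_zero
  have hderiv := hasFDerivAt_comp_prodMk_left hdiff.hasFDerivAt
  simp only [hconst] at hderiv
  exact hderiv.unique (hasFDerivAt_const (f ζ) x)

theorem inter_eq_leafGraph {D : Set (E × P)} {B : Set E} {X : E → P}
    (hD : D ⊆ Prod.fst ⁻¹' Y.source ∩ Y.shift ⁻¹' U)
    (hBX : ∀ χ x, (χ, x) ∈ D ∧ f (Y.shift (χ, x)) = x ↔ χ ∈ B ∧ X χ = x) :
    {φ | φ ∈ U ∧ δ φ = f φ} ∩ (Y.source ∩ (fun φ => (Y.proj φ, δ φ)) ⁻¹' D) =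
      Y.leafGraph B X := by
  ext φ
  constructor
  · rintro ⟨⟨-, hφ⟩, hsource, hφD⟩
    exact ⟨hsource, (hBX _ _).1 ⟨hφD, by rw [shift_proj hsource, hφ]⟩⟩
  · rintro ⟨hsource, hφB⟩
    obtain ⟨hφD, hfix⟩ := (hBX _ _).2 hφB
    rw [shift_proj hsource] at hfix
    have hφU : Y.shift (Y.proj φ, δ φ) ∈ U := (hD hφD).2
    rw [shift_proj hsource] at hφU
    exact ⟨⟨hφU, hfix.symm⟩, hsource, hφD⟩

/-- On the leaves contained in `Z`, the fixed point equation `x = f (shift (χ, x))` that describes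
`{δ = f}` in leaf coordinates has a constant right hand side. -/
theorem exists_isOpen_inter_eq_leafGraph [CompleteSpace E] [CompleteSpace P] (hU : IsOpen U)
    (hf : ContDiffOn ℝ 1 f U) (hZ : Z ⊆ Y.source ∩ U) (hZshift : ∀ φ ∈ Z, ∀ x, Y.shift (φ, x) ∈ Z)
    (hfshift : ∀ φ ∈ Z, ∀ x, f (Y.shift (φ, x)) = f φ) :
    ∃ (O B : Set E) (X : E → P), IsOpen O ∧ IsOpen B ∧ B ⊆ Y.source ∧ ContDiffOn ℝ 1 X B ∧
      {φ | φ ∈ U ∧ δ φ = f φ} ∩ O = Y.leafGraph B X ∧ {φ | φ ∈ U ∧ δ φ = f φ} ∩ Z ⊆ O := by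
  have hfT : ContDiffOn ℝ 1 (fun p => f (Y.shift p)) (Prod.fst ⁻¹' Y.source ∩ Y.shift ⁻¹' U) :=
    hf.comp (contDiffOn_shift.mono inter_subset_left) fun _ hp => hp.2
  obtain ⟨D, hDsub, hD, hmem, B, X, hB, hX, hBX⟩ := exists_contDiffOn_fixedPoint_graph
    (isOpen_setOf_shift_mem hU) hfT hU hf.continuousOn
  refine ⟨Y.source ∩ (fun φ => (Y.proj φ, δ φ)) ⁻¹' D, B, X, isOpen_setOf_proj_mem hD, hB,
    fun χ hχ => (hDsub ((hBX χ _).2 ⟨hχ, rfl⟩).1).1, hX,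
    inter_eq_leafGraph hDsub hBX, ?_⟩
  rintro φ ⟨⟨-, hφ⟩, hφZ⟩
  have hsource : φ ∈ Y.source := (hZ hφZ).1
  have hprojZ : Y.proj φ ∈ Z := by rw [proj_eq_shift]; exact hZshift φ hφZ _
  obtain ⟨hζsource, hζU⟩ := hZ hprojZ
  have hshiftU : Y.shift (Y.proj φ, f (Y.proj φ)) ∈ U := (hZ (hZshift _ hprojZ _)).2
  have hcoord : δ φ = f (Y.proj φ) := by rw [hφ, proj_eq_shift, hfshift φ hφZ]
  refine ⟨hsource, ?_⟩
  rw [mem_preimage, hcoord]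
  refine hmem _ hζU ⟨hζsource, hshiftU⟩ ?_
  rw [fderiv_comp_shift_comp_inr_eq_zero hU hf hζsource hshiftU (hfshift _ hprojZ), norm_zero]
  exact one_pos

end RightInverseFamily

section Evaluation

open Metric Topology Filter Asymptotics
open scoped NNReal

section OperatorFamily

variable {G Z E : Type*} [NormedAddCommGroup G] [NormedSpace ℝ G] [NormedAddCommGroup Z]
  [NormedSpace ℝ Z] [NormedAddCommGroup E] [NormedSpace ℝ E]

theorem lipschitzOnWith_of_hasDerivWithinAt_apply {A A' : ℝ → Z →L[ℝ] E} {s : Set ℝ} {C : ℝ≥0}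
    (hs : Convex ℝ s) (hA : ∀ z, ∀ t ∈ s, HasDerivWithinAt (fun t => A t z) (A' t z) s t)
    (hC : ∀ t ∈ s, ‖A' t‖ ≤ C) : LipschitzOnWith C A s := by
  refine LipschitzOnWith.of_dist_le_mul fun t ht t' ht' => ?_
  rw [dist_eq_norm, dist_eq_norm]
  refine ContinuousLinearMap.opNorm_le_bound _ (by positivity) fun z => ?_
  have hle := hs.norm_image_sub_le_of_norm_hasDerivWithin_le (hA z)
    (fun t ht => (A' t).le_of_opNorm_le (hC t ht) z) ht' ht
  rwa [mul_right_comm] at hle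

theorem hasFDerivWithinAt_apply_of_continuousWithinAt {A : G → Z →L[ℝ] E} {s : Set G} {t : G}
    {z : Z} {A' : G →L[ℝ] E} (hcont : ContinuousWithinAt A s t)
    (hA : HasFDerivWithinAt (fun t => A t z) A' s t) :
    HasFDerivWithinAt (fun p : Z × G => A p.2 p.1) (A t ∘L .fst ℝ Z G + A' ∘L .snd ℝ Z G)
      (univ ×ˢ s) (z, t) := by
  have hsnd : Tendsto Prod.snd (𝓝[univ ×ˢ s] (z, t)) (𝓝[s] t) :=
    continuousWithinAt_snd.tendsto_nhdsWithin fun p hp => hp.2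
  have hcross : HasFDerivWithinAt (fun p : Z × G => (A p.2 - A t) (p.1 - z))
      (0 : Z × G →L[ℝ] E) (univ ×ˢ s) (z, t) := by
    rw [hasFDerivWithinAt_iff_isLittleO]
    have hsmall : (fun p : Z × G => A p.2 - A t) =o[𝓝[univ ×ˢ s] (z, t)] fun _ => (1 : ℝ) :=
      (isLittleO_one_iff ℝ).2 (tendsto_sub_nhds_zero_iff.2 (hcont.tendsto.comp hsnd))
    have hfst : (fun p : Z × G => p.1 - z) =O[𝓝[univ ×ˢ s] (z, t)] fun p => p - (z, t) :=
      IsBigO.of_bound 1 (Eventually.of_forall fun p => by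
        rw [one_mul]
        exact norm_fst_le (p - (z, t)))
    have hprod := hsmall.norm_left.mul_isBigO hfst.norm_norm
    simp only [one_mul] at hprod
    refine (IsBigO.of_bound 1 (Eventually.of_forall fun p => ?_)).trans_isLittleO
      hprod.of_norm_right
    simpa using (A p.2 - A t).le_opNorm (p.1 - z)
  have hsum := (hcross.add ((A t).hasFDerivAt.comp_hasFDerivWithinAt (z, t)
    (hasFDerivWithinAt_fst.sub_const z))).add
    (hA.comp (z, t) hasFDerivWithinAt_snd fun p hp => hp.2)
  rw [zero_add] at hsum
  exact hsum.congr_of_eventuallyEq (Eventually.of_forall fun p => by simp) (by simp)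

theorem contDiffOn_uncurry_clm_apply {A A' : ℝ → Z →L[ℝ] E} {s : Set ℝ} {C : ℝ≥0}
    (hs : Convex ℝ s) (hs' : UniqueDiffOn ℝ s)
    (hA : ∀ z, ∀ t ∈ s, HasDerivWithinAt (fun t => A t z) (A' t z) s t)
    (hC : ∀ t ∈ s, ‖A' t‖ ≤ C)
    (hA' : ContinuousOn (fun p : Z × ℝ => A' p.2 p.1) (univ ×ˢ s)) :
    ContDiffOn ℝ 1 (fun p : Z × ℝ => A p.2 p.1) (univ ×ˢ s) := by
  have hcont : ContinuousOn A s := (lipschitzOnWith_of_hasDerivWithinAt_apply hs hA hC).continuousOn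
  rw [← zero_add (1 : WithTop ℕ∞), contDiffOn_succ_iff_hasFDerivWithinAt_of_uniqueDiffOn
    (uniqueDiffOn_univ.prod hs')]
  refine ⟨by simp, fun p => A p.2 ∘L .fst ℝ Z ℝ +
    ContinuousLinearMap.toSpanSingleton ℝ (A' p.2 p.1) ∘L .snd ℝ Z ℝ, ?_, fun p hp =>
    hasFDerivWithinAt_apply_of_continuousWithinAt (hcont _ hp.2)
      (hA p.1 p.2 hp.2).hasFDerivWithinAt⟩
  rw [contDiffOn_zero]
  refine ((hcont.comp continuousOn_snd fun p hp => hp.2).clm_comp continuousOn_const).add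
    (ContinuousOn.clm_comp ?_ continuousOn_const)
  exact (ContinuousLinearMap.toSpanSingletonCLE (𝕜 := ℝ)).continuous.comp_continuousOn hA'

end OperatorFamily

section ExtFun

variable {E : Type*} [NormedAddCommGroup E]

theorem extFun_eq_IccExtend (hr : -r ≤ 0) (φ : C(Icc0 r, E)) {t : ℝ} (ht : t ∈ Icc0 r) :
    extFun φ t = IccExtend hr φ t := by
  rw [extFun, dif_pos ht, IccExtend_of_mem hr φ ht]

theorem continuousOn_extFun (hr : -r ≤ 0) :
    ContinuousOn (fun p : C(Icc0 r, E) × ℝ => extFun p.1 p.2) (univ ×ˢ Icc0 r) := by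
  have hcont : Continuous fun p : C(Icc0 r, E) × ℝ => p.1 (projIcc (-r) 0 hr p.2) :=
    continuous_fst.eval (continuous_projIcc.comp continuous_snd)
  exact hcont.continuousOn.congr fun p hp => extFun_eq_IccExtend hr p.1 hp.2

theorem norm_extFun_le (φ : C(Icc0 r, E)) (t : ℝ) : ‖extFun φ t‖ ≤ ‖φ‖ := by
  rw [extFun]
  split_ifs with ht
  · exact φ.norm_coe_le_norm _
  · simp only [norm_zero, norm_nonneg]

end ExtFun

variable {E : Type*} [NormedAddCommGroup E] [NormedSpace ℝ E]

/-- Evaluation at `t` of the extension by zero of a continuous map on `[-r,0]`, as a continuous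
linear map. -/
def extFunCLM (r : ℝ) (E : Type*) [NormedAddCommGroup E] [NormedSpace ℝ E] (t : ℝ) :
    C(Icc0 r, E) →L[ℝ] E :=
  LinearMap.mkContinuous
    { toFun := fun φ => extFun φ t
      map_add' := fun φ ψ => congrFun (extFun_add φ ψ) t
      map_smul' := fun a φ => congrFun (extFun_smul a φ) t }
    1 fun φ => (one_mul ‖φ‖).symm ▸ norm_extFun_le φ t

end Evaluation

section DelayEquation

/-- Without these two shortcuts `C1 r E` receives the subtype topology, which is not reducibly
equal to the topology of its norm, and operator norms on `C1 r E →L[ℝ] E` are not found. -/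
local instance instNormedAddCommGroupC1 {r : ℝ} {E : Type*} [NormedAddCommGroup E]
    [NormedSpace ℝ E] : NormedAddCommGroup (C1 r E) := (C1sub r E).normedAddCommGroup

local instance instNormedSpaceC1 {r : ℝ} {E : Type*} [NormedAddCommGroup E] [NormedSpace ℝ E] :
    NormedSpace ℝ (C1 r E) := (C1sub r E).normedSpace

section C1Evaluation

variable {E : Type*} [NormedAddCommGroup E] [NormedSpace ℝ E]

/-- The evaluation `φ ↦ φ(t)` on `C¹([-r,0],E)`, as a continuous linear map. -/
def evCLM (r : ℝ) (E : Type*) [NormedAddCommGroup E] [NormedSpace ℝ E] (t : ℝ) : C1 r E →L[ℝ] E :=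
  extFunCLM r E t ∘L .fst ℝ _ _ ∘L (C1sub r E).subtypeL

/-- The evaluation `φ ↦ φ'(t)` on `C¹([-r,0],E)`, as a continuous linear map. -/
def dvCLM (r : ℝ) (E : Type*) [NormedAddCommGroup E] [NormedSpace ℝ E] (t : ℝ) : C1 r E →L[ℝ] E :=
  extFunCLM r E t ∘L .snd ℝ _ _ ∘L (C1sub r E).subtypeL

theorem evCLM_apply (t : ℝ) (φ : C1 r E) : evCLM r E t φ = evC φ t := rfl

theorem dvCLM_apply (t : ℝ) (φ : C1 r E) : dvCLM r E t φ = dvC φ t := rfl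

theorem norm_dvCLM_le_one (t : ℝ) : ‖dvCLM r E t‖ ≤ 1 :=
  ContinuousLinearMap.opNorm_le_bound _ zero_le_one fun φ => by
    rw [one_mul]
    exact (norm_extFun_le φ.1.2 t).trans (norm_snd_le φ.1)

theorem contDiffOn_evC (hr : 0 < r) :
    ContDiffOn ℝ 1 (fun p : C1 r E × ℝ => evC p.1 p.2) (univ ×ˢ Icc0 r) := by
  have hderiv : ContinuousOn (fun p : C1 r E × ℝ => dvC p.1 p.2) (univ ×ˢ Icc0 r) :=
    (continuousOn_extFun (neg_nonpos.2 hr.le)).comp (f := fun p : C1 r E × ℝ => (p.1.1.2, p.2))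
      (by fun_prop) fun p hp => ⟨mem_univ _, hp.2⟩
  exact contDiffOn_uncurry_clm_apply (A := evCLM r E) (A' := dvCLM r E) (C := 1)
    (convex_Icc _ _) (uniqueDiffOn_Icc (neg_lt_zero.2 hr)) (fun φ t ht => φ.2 t ht)
    (fun t _ => norm_dvCLM_le_one t) hderiv

end C1Evaluation

section Completeness

variable {E : Type*} [NormedAddCommGroup E] [NormedSpace ℝ E] [CompleteSpace E]

theorem mem_C1sub_iff_sub_eq_integral (hr : -r ≤ 0) (p : C(Icc0 r, E) × C(Icc0 r, E)) :
    p ∈ C1sub r E ↔ ∀ t : Icc0 r,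
      p.1 t - p.1 ⟨-r, left_mem_Icc.2 hr⟩ = ∫ s in (-r)..t, IccExtend hr p.2 s := by
  have hcont : Continuous (IccExtend hr p.2) := p.2.continuous.Icc_extend'
  have hcoe : ∀ t : Icc0 r, extFun p.1 t = p.1 t := fun t => by
    rw [extFun, dif_pos t.2]
  constructor
  · intro hp t
    rw [intervalIntegral.integral_eq_sub_of_hasDerivAt_of_le (f := extFun p.1) t.2.1 _ _
      (hcont.intervalIntegrable _ _), hcoe t, hcoe ⟨-r, _⟩]
    · exact fun s hs => ((hp s ⟨hs.1, hs.2.trans t.2.2⟩).continuousWithinAt).mono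
        (Icc_subset_Icc_right t.2.2)
    · intro s hs
      have hs0 : s < 0 := hs.2.trans_le t.2.2
      rw [← extFun_eq_IccExtend hr p.2 ⟨hs.1.le, hs0.le⟩]
      exact (hp s ⟨hs.1.le, hs0.le⟩).hasDerivAt (Icc_mem_nhds hs.1 hs0)
  · intro h t ht
    have hprim : HasDerivAt (fun t => p.1 ⟨-r, left_mem_Icc.2 hr⟩ +
        ∫ s in (-r)..t, IccExtend hr p.2 s) (IccExtend hr p.2 t) t :=
      (hcont.integral_hasStrictDerivAt (-r) t).hasDerivAt.const_add _
    have hext : ∀ s ∈ Icc0 r, extFun p.1 s = p.1 ⟨-r, left_mem_Icc.2 hr⟩ +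
        ∫ s in (-r)..s, IccExtend hr p.2 s := fun s hs => by
      rw [hcoe ⟨s, hs⟩, ← h ⟨s, hs⟩, add_sub_cancel]
    rw [extFun_eq_IccExtend hr p.2 ht]
    exact hprim.hasDerivWithinAt.congr hext (hext t ht)

theorem isClosed_C1sub (hr : -r ≤ 0) :
    IsClosed (C1sub r E : Set (C(Icc0 r, E) × C(Icc0 r, E))) := by
  have hinter : (C1sub r E : Set (C(Icc0 r, E) × C(Icc0 r, E))) = ⋂ t : Icc0 r,
      {p | p.1 t - p.1 ⟨-r, left_mem_Icc.2 hr⟩ = ∫ s in (-r)..t, IccExtend hr p.2 s} := by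
    ext p
    rw [mem_iInter]
    exact mem_C1sub_iff_sub_eq_integral hr p
  have heval : Continuous fun q : (C(Icc0 r, E) × C(Icc0 r, E)) × ℝ => IccExtend hr q.1.2 q.2 :=
    continuous_fst.snd.eval (continuous_projIcc.comp continuous_snd)
  rw [hinter]
  exact isClosed_iInter fun t => isClosed_eq (by fun_prop)
    (intervalIntegral.continuous_parametric_intervalIntegral_of_continuous' heval _ _)

theorem completeSpace_C1 (hr : -r ≤ 0) : CompleteSpace (C1 r E) :=
  (isClosed_C1sub hr).completeSpace_coe

end Completeness

section Ymap

/-- The map `ψ ↦ ψ · e_ν`, as a continuous linear map. -/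
def singleCLM (ν : Fin n) : C1 r ℝ →L[ℝ] C1 r (Fin n → ℝ) :=
  (((sCLM n ν).compLeftContinuous ℝ (Icc0 r)).prodMap
    ((sCLM n ν).compLeftContinuous ℝ (Icc0 r)) ∘L (C1sub r ℝ).subtypeL).codRestrict
    (C1sub r (Fin n → ℝ)) fun φ => (singleC1 ν φ).2

theorem singleCLM_apply (ν : Fin n) (φ : C1 r ℝ) : singleCLM ν φ = singleC1 ν φ := rfl

theorem Ymap_apply (ψ : Fin n → C1 r ℝ) (x : Fin n → ℝ) :
    Ymap ψ x = ∑ ν, x ν • singleC1 ν (ψ ν) := rfl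

theorem sum_smul_sCLM (x a : Fin n → ℝ) : ∑ ν, x ν • sCLM n ν (a ν) = x * a := by
  ext μ
  simp [sCLM, apply_ite, ite_apply]

theorem evC_Ymap (ψ : Fin n → C1 r ℝ) (x : Fin n → ℝ) (t : ℝ) :
    evC (Ymap ψ x) t = x * fun ν => evC (ψ ν) t := by
  rw [← evCLM_apply, Ymap_apply, map_sum, ← sum_smul_sCLM]
  refine Finset.sum_congr rfl fun ν _ => ?_
  rw [map_smul]
  exact congrArg (x ν • ·) (extFun_CMsingle ν (ψ ν).1.1 t)

theorem dvC_Ymap (ψ : Fin n → C1 r ℝ) (x : Fin n → ℝ) (t : ℝ) :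
    dvC (Ymap ψ x) t = x * fun ν => dvC (ψ ν) t := by
  rw [← dvCLM_apply, Ymap_apply, map_sum, ← sum_smul_sCLM]
  refine Finset.sum_congr rfl fun ν _ => ?_
  rw [map_smul]
  exact congrArg (x ν • ·) (extFun_CMsingle ν (ψ ν).1.2 t)

/-- The map `x ↦ Y · x` as a continuous linear map. -/
def YmapCLM (ψ : Fin n → C1 r ℝ) : (Fin n → ℝ) →L[ℝ] C1 r (Fin n → ℝ) :=
  LinearMap.toContinuousLinearMap (Ymap ψ)

theorem YmapCLM_apply (ψ : Fin n → C1 r ℝ) (x : Fin n → ℝ) : YmapCLM ψ x = Ymap ψ x := rfl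

theorem contDiffOn_YmapCLM {H : Type*} [NormedAddCommGroup H] [NormedSpace ℝ H] {s : Set H}
    {y : Fin n → H → C1 r ℝ} (hy : ∀ ν, ContDiffOn ℝ 1 (y ν) s) :
    ContDiffOn ℝ 1 (fun w => YmapCLM fun ν => y ν w) s := by
  refine contDiffOn_clm_apply.2 fun x => ?_
  simp only [YmapCLM_apply, Ymap_apply, ← singleCLM_apply]
  exact ContDiffOn.sum fun ν _ => ((singleCLM ν).contDiff.comp_contDiffOn (hy ν)).const_smul (x ν)

end Ymap

namespace Setting

variable {H : Type*} [NormedAddCommGroup H] [NormedSpace ℝ H]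
  {S : Setting r n kk H}

/-- The restriction of `L` to `C¹([-r,0],ℝⁿ)`, as a continuous linear map. -/
def LofCLM (S : Setting r n kk H) : C1 r (Fin n → ℝ) →L[ℝ] H :=
  S.L ∘L .fst ℝ _ _ ∘L (C1sub r (Fin n → ℝ)).subtypeL

theorem LofCLM_apply (φ : C1 r (Fin n → ℝ)) : S.LofCLM φ = S.Lof φ := rfl

theorem isOpen_Lof_preimage_W : IsOpen (S.Lof ⁻¹' S.W) := S.Wopen.preimage S.LofCLM.continuous

theorem contDiffOn_hat (hr : 0 < r) : ContDiffOn ℝ 1 S.hat (S.Lof ⁻¹' S.W) := by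
  refine contDiffOn_pi.2 fun k => ?_
  have hd : ContDiffOn ℝ 1 (fun φ => -S.d k (S.Lof φ)) (S.Lof ⁻¹' S.W) :=
    ((S.d_smooth k).comp S.LofCLM.contDiff.contDiffOn fun _ => id).neg
  refine (contDiffOn_evC hr).comp (contDiffOn_id.prodMk hd) fun φ hφ => ⟨mem_univ _, ?_⟩
  exact ⟨neg_le_neg (S.d_mem k _ hφ).2, neg_nonpos.2 (S.d_mem k _ hφ).1⟩

theorem isOpen_U (hr : 0 < r) : IsOpen S.U :=
  (contDiffOn_hat hr).continuousOn.isOpen_inter_preimage isOpen_Lof_preimage_W S.Vopen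

theorem contDiffOn_fmap (hr : 0 < r) : ContDiffOn ℝ 1 S.fmap S.U :=
  S.g_smooth.comp ((contDiffOn_hat hr).mono fun _ hφ => hφ.1) fun _ hφ => hφ.2

theorem isOpen_WupJ (J : Finset (Fin kk)) : IsOpen (S.WupJ J) := by
  refine isOpen_iff_mem_nhds.2 fun w hw => Filter.inter_mem (S.Wopen.mem_nhds hw.1) ?_
  refine Filter.eventually_all.2 fun k => Filter.eventually_imp_distrib_left.2 fun hk => ?_
  exact ((S.d_smooth k).continuousOn.continuousAt (S.Wopen.mem_nhds hw.1)).eventually_const_lt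
    (hw.2 k hk)

theorem Lof_Ymap {ψ : Fin n → C1 r ℝ} (hψ : ∀ ν, S.L (singleC1 ν (ψ ν)).1.1 = 0)
    (x : Fin n → ℝ) : S.Lof (Ymap ψ x) = 0 := by
  rw [← LofCLM_apply, Ymap_apply, map_sum]
  refine Finset.sum_eq_zero fun ν _ => ?_
  rw [map_smul, LofCLM_apply, Lof, hψ, smul_zero]

theorem Lof_add_Ymap {ψ : Fin n → C1 r ℝ} (hψ : ∀ ν, S.L (singleC1 ν (ψ ν)).1.1 = 0)
    (φ : C1 r (Fin n → ℝ)) (x : Fin n → ℝ) : S.Lof (φ + Ymap ψ x) = S.Lof φ := by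
  rw [← LofCLM_apply, map_add, LofCLM_apply, LofCLM_apply, Lof_Ymap hψ, add_zero]

theorem hat_add_Ymap {ψ : Fin n → C1 r ℝ} (hψ : ∀ ν, S.L (singleC1 ν (ψ ν)).1.1 = 0)
    {φ : C1 r (Fin n → ℝ)} (hvan : ∀ ν k, evC (ψ ν) (-S.d k (S.Lof φ)) = 0) (x : Fin n → ℝ) :
    S.hat (φ + Ymap ψ x) = S.hat φ := by
  ext1 k
  have hY : evC (Ymap ψ x) (-S.d k (S.Lof φ)) = 0 := by
    rw [evC_Ymap]
    simp only [hvan]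
    exact mul_zero x
  rw [hat, Lof_add_Ymap hψ, ← evCLM_apply, map_add, evCLM_apply _ (Ymap ψ x), hY, add_zero]
  rfl

/-- The maps `Y_J(w)`: the leaves of this family are the sets `φ + range (Y_J(Lφ))`, and its
projection onto `ker (φ ↦ φ'(0)) = X₀` is `R^J`. -/
def rightInverseFamily (S : Setting r n kk H) (J : Finset (Fin kk)) (y : Fin n → H → C1 r ℝ)
    (hy_smooth : ∀ ν, ContDiffOn ℝ 1 (y ν) (S.WupJ J))
    (hy1 : ∀ ν, ∀ w ∈ S.WupJ J, dvC (y ν w) 0 = 1)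
    (hyL : ∀ ν, ∀ w ∈ S.WupJ J, S.L (singleC1 ν (y ν w)).1.1 = 0) :
    RightInverseFamily (dvCLM r (Fin n → ℝ) 0) S.LofCLM where
  domain := S.WupJ J
  isOpen_domain := isOpen_WupJ J
  toFun w := YmapCLM fun ν => y ν w
  contDiffOn_toFun := contDiffOn_YmapCLM hy_smooth
  δ_toFun w hw x := by
    rw [dvCLM_apply, YmapCLM_apply, dvC_Ymap]
    simp only [hy1 _ w hw]
    exact mul_one x
  Λ_toFun w hw x := by
    rw [LofCLM_apply, YmapCLM_apply, Lof_Ymap fun ν => hyL ν w hw]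

theorem hat_add_Ymap_of_mem_UJ {J : Finset (Fin kk)} {y : Fin n → H → C1 r ℝ}
    (hy0 : ∀ ν, ∀ w ∈ S.WupJ J, evC (y ν w) 0 = 0)
    (hyL : ∀ ν, ∀ w ∈ S.WupJ J, S.L (singleC1 ν (y ν w)).1.1 = 0)
    (hyvan : ∀ ν, ∀ w ∈ S.WupJ J, ∀ k ∉ J, ∀ t ∈ Icc (-r) (-(S.d k w)), evC (y ν w) t = 0)
    {φ : C1 r (Fin n → ℝ)} (hφ : φ ∈ S.UJ J) (x : Fin n → ℝ) :
    S.hat (φ + Ymap (fun ν => y ν (S.Lof φ)) x) = S.hat φ := by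
  obtain ⟨-, hW, hzero, hpos⟩ := hφ
  have hvan : ∀ ν k, evC (y ν (S.Lof φ)) (-S.d k (S.Lof φ)) = 0 := by
    intro ν k
    by_cases hk : k ∈ J
    · rw [hzero k hk, neg_zero, hy0 ν _ ⟨hW, hpos⟩]
    · exact hyvan ν _ ⟨hW, hpos⟩ k hk _ ⟨neg_le_neg (S.d_mem k _ hW).2, le_rfl⟩
  exact hat_add_Ymap (fun ν => hyL ν _ ⟨hW, hpos⟩) hvan x

theorem add_Ymap_mem_UJ {J : Finset (Fin kk)} {ψ : Fin n → C1 r ℝ}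
    (hψ : ∀ ν, S.L (singleC1 ν (ψ ν)).1.1 = 0) {φ : C1 r (Fin n → ℝ)} (hφ : φ ∈ S.UJ J)
    {x : Fin n → ℝ} (hhat : S.hat (φ + Ymap ψ x) = S.hat φ) : φ + Ymap ψ x ∈ S.UJ J := by
  simpa only [UJ, U, mem_ofPred_eq, Lof_add_Ymap hψ, hhat] using hφ

end Setting

theorem statement15_general {H : Type*} [NormedAddCommGroup H] [NormedSpace ℝ H] (hr : 0 < r)
    (S : Setting r n kk H) (J : Finset (Fin kk)) (y : Fin n → H → C1 r ℝ)
    (hy_smooth : ∀ ν, ContDiffOn ℝ 1 (y ν) (S.WupJ J))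
    (hy0 : ∀ ν, ∀ w ∈ S.WupJ J, evC (y ν w) 0 = 0)
    (hy1 : ∀ ν, ∀ w ∈ S.WupJ J, dvC (y ν w) 0 = 1)
    (hyL : ∀ ν, ∀ w ∈ S.WupJ J, S.L (singleC1 ν (y ν w)).1.1 = 0)
    (hyvan : ∀ ν, ∀ w ∈ S.WupJ J, ∀ k ∉ J, ∀ t ∈ Icc (-r) (-(S.d k w)), evC (y ν w) t = 0) :
    ∃ (N O : Set (C1 r (Fin n → ℝ))) (σ : C1 r (Fin n → ℝ) → C1 r (Fin n → ℝ)),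
      IsOpen O ∧ N = S.Xf ∩ O ∧ S.XfJ J ⊆ N ∧
      (∃ O', IsOpen O' ∧ S.RJmap y '' N = (X0sub r n : Set (C1 r (Fin n → ℝ))) ∩ O') ∧
      ContDiffOn ℝ 1 (S.RJmap y) N ∧ InjOn (S.RJmap y) N ∧
      ContDiffOn ℝ 1 σ (S.RJmap y '' N) ∧ InvOn σ (S.RJmap y) N (S.RJmap y '' N) ∧
      (∀ χ ∈ S.RJmap y '' N, σ χ = χ + Ymap (fun ν => y ν (S.Lof χ)) (S.fmap (σ χ))) ∧
      N = (fun χ => χ + Ymap (fun ν => y ν (S.Lof χ)) (S.fmap (σ χ))) '' (S.RJmap y '' N) ∧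
      IsAlmostGraphOver N (X0sub r n : Set (C1 r (Fin n → ℝ))) := by
  have : CompleteSpace (C1 r (Fin n → ℝ)) := completeSpace_C1 (neg_nonpos.2 hr.le)
  let Y := S.rightInverseFamily J y hy_smooth hy1 hyL
  have hhat : ∀ φ ∈ S.UJ J, ∀ x, S.hat (Y.shift (φ, x)) = S.hat φ := fun φ hφ x =>
    Setting.hat_add_Ymap_of_mem_UJ hy0 hyL hyvan hφ x
  obtain ⟨O, B, X, hO, hB, hBsub, hX, hgraph, hJO⟩ :=
    Y.exists_isOpen_inter_eq_leafGraph (Z := S.UJ J) (Setting.isOpen_U hr)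
      (Setting.contDiffOn_fmap hr) (fun φ hφ => ⟨⟨hφ.1.1, hφ.2.2.2⟩, hφ.1⟩)
      (fun φ hφ x => Setting.add_Ymap_mem_UJ (fun ν => hyL ν _ ⟨hφ.1.1, hφ.2.2.2⟩) hφ (hhat φ hφ x))
      (fun φ hφ x => congrArg S.g (hhat φ hφ x))
  change S.Xf ∩ O = Y.leafGraph B X at hgraph
  have himage : S.RJmap y '' (S.Xf ∩ O) = (X0sub r n : Set (C1 r (Fin n → ℝ))) ∩ B :=
    hgraph ▸ Y.image_proj_leafGraph hBsub
  have hfix : ∀ χ ∈ S.RJmap y '' (S.Xf ∩ O), S.fmap (Y.shift (χ, X χ)) = X χ := fun χ hχ =>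
    have hχ' := himage ▸ hχ
    Y.apply_shift_eq_of_leafGraph_subset hBsub (fun φ hφ => (hgraph.superset hφ).1.2) hχ'.1 hχ'.2
  have hinv : InvOn (fun χ => Y.shift (χ, X χ)) (S.RJmap y) (S.Xf ∩ O)
      (S.RJmap y '' (S.Xf ∩ O)) := by
    rw [himage, hgraph]
    exact Y.invOn_shift_proj_leafGraph hBsub
  refine ⟨S.Xf ∩ O, O, fun χ => Y.shift (χ, X χ), hO, rfl, fun φ hφ => ⟨hφ.1, hJO hφ⟩,
    ⟨B, hB, himage⟩, ?_, hinv.1.injOn, ?_, hinv,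
    fun χ hχ => by rw [hfix χ hχ]; rfl, ?_, ?_⟩
  · exact Y.contDiffOn_proj.mono (hgraph ▸ Y.leafGraph_subset_source)
  · exact himage ▸ (Y.contDiffOn_shift_graph hBsub hX).mono inter_subset_right
  · refine hinv.1.image_image.symm.trans (image_congr fun χ hχ => ?_)
    rw [hfix χ hχ]
    rfl
  · exact hgraph ▸ Y.isAlmostGraphOver_leafGraph hBsub hX

end DelayEquation

/-- Theorem 4.7. -/
theorem statement15 (hk : 0 < kk) (hr : 0 < r) (S : Setting r n kk F)
    (J : Finset (Fin kk)) (hJ : J ≠ Finset.univ) (hUJ : (S.UJ J).Nonempty)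
    (y : Fin n → F → C1 r ℝ)
    (hy_smooth : ∀ ν, ContDiffOn ℝ 1 (y ν) (S.WupJ J))
    (hy0 : ∀ ν, ∀ w ∈ S.WupJ J, evC (y ν w) 0 = 0)
    (hy1 : ∀ ν, ∀ w ∈ S.WupJ J, dvC (y ν w) 0 = 1)
    (hyL : ∀ ν, ∀ w ∈ S.WupJ J, S.L (singleC1 ν (y ν w)).1.1 = 0)
    (hyvan : ∀ ν, ∀ w ∈ S.WupJ J, ∀ k ∉ J, ∀ t ∈ Set.Icc (-r) (-(S.d k w)),
      evC (y ν w) t = 0)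
    (hyp : S.HypB ∨ S.HypD1B hk ∨ S.U = S.UJ J) :
    ∃ (N O : Set (C1 r (Fin n → ℝ))) (σ : C1 r (Fin n → ℝ) → C1 r (Fin n → ℝ)),
      IsOpen O ∧ N = S.Xf ∩ O ∧ S.XfJ J ⊆ N ∧
      (∃ O', IsOpen O' ∧ S.RJmap y '' N = (X0sub r n : Set (C1 r (Fin n → ℝ))) ∩ O') ∧
      ContDiffOn ℝ 1 (S.RJmap y) N ∧ Set.InjOn (S.RJmap y) N ∧
      ContDiffOn ℝ 1 σ (S.RJmap y '' N) ∧ Set.InvOn σ (S.RJmap y) N (S.RJmap y '' N) ∧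
      (∀ χ ∈ S.RJmap y '' N, σ χ = χ + Ymap (fun ν => y ν (S.Lof χ)) (S.fmap (σ χ))) ∧
      N = (fun χ => χ + Ymap (fun ν => y ν (S.Lof χ)) (S.fmap (σ χ))) '' (S.RJmap y '' N) ∧
      IsAlmostGraphOver N (X0sub r n : Set (C1 r (Fin n → ℝ))) :=
  statement15_general hr S J y hy_smooth hy0 hy1 hyL hyvan
end
end

section
/- If A:𝒪→E is an almost graph diffeomorphism associated with 𝒪, X, and H, then X∩𝒪 is an almost graph over H: with dom = A(X∩𝒪) = H∩A(𝒪) and α:H⊃dom→E defined by α(ζ) = A^{-1}(ζ) − ζ, the map α is continuously differentiable with α(ζ)=0 on dom∩(X∩𝒪), α(ζ)∈E∖H on dom∖(X∩𝒪), and dom∋ζ↦ζ+α(ζ)∈E defines a diffeomorphism onto X∩𝒪. -/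
open Set

noncomputable section

/-!
The displacement `α ζ = A⁻¹ ζ - ζ` satisfies `ζ + α ζ = A⁻¹ ζ`, so the graph map is the inverse of
`A` restricted to `S = X ∩ O`. The points of `S` in `H` are fixed by `A`, hence by `A⁻¹`, and there
`α` vanishes. Conversely, if `ζ` and `α ζ` both lie in `H`, then so does their sum `A⁻¹ ζ ∈ S`;
being a fixed point of `A`, it equals `ζ`, so that `ζ ∈ S`.
-/

lemma isFixedPt_of_leftInvOn {β : Type*} {f g : β → β} {s : Set β} (hgf : LeftInvOn g f s)
    {x : β} (hx : x ∈ s) (hfx : Function.IsFixedPt f x) : Function.IsFixedPt g x :=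
  calc
    g x = g (f x) := congrArg g hfx.symm
    _ = x := hgf hx

lemma sub_notMem_of_leftInvOn {M σ : Type*} [AddGroup M] [SetLike σ M] [AddMemClass σ M]
    {H : σ} {f g : M → M} {s : Set M} (hgf : LeftInvOn g f s)
    (hfix : ∀ x ∈ (H : Set M) ∩ s, f x = x) {y : M} (hyf : y ∈ f '' s) (hyH : y ∈ H)
    (hys : y ∉ s) : g y - y ∉ H := by
  obtain ⟨x, hxs, rfl⟩ := hyf
  rw [hgf hxs]
  intro hsub
  have hxH : x ∈ H := by simpa only [sub_add_cancel] using add_mem hsub hyH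
  exact hys ((hfix x ⟨hxH, hxs⟩).symm ▸ hxs)

section

variable {E : Type*} [NormedAddCommGroup E] [NormedSpace ℝ E]

lemma isC1DiffeoOn_image_of_leftInvOn {E' : Type*} [NormedAddCommGroup E'] [NormedSpace ℝ E']
    {f : E → E'} {g : E' → E} {s : Set E} (hf : ContDiffOn ℝ 1 f s)
    (hg : ContDiffOn ℝ 1 g (f '' s)) (hgf : LeftInvOn g f s) : IsC1DiffeoOn g (f '' s) s := by
  have hfg : LeftInvOn f g (f '' s) := hgf.rightInvOn_image
  exact ⟨hg, hfg.injOn, hgf.image_image, f, hf, hfg, hgf⟩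

theorem statement17_general {σ : Type*} [SetLike σ E] [AddMemClass σ E] (S : Set E) (H : σ)
    (A Ainv : E → E) (hA : ContDiffOn ℝ 1 A S) (hAinv : ContDiffOn ℝ 1 Ainv (A '' S))
    (hleft : LeftInvOn Ainv A S) (hAH : A '' S ⊆ (H : Set E))
    (hfix : ∀ ζ ∈ (H : Set E) ∩ S, A ζ = ζ) :
    ContDiffOn ℝ 1 (fun ζ => Ainv ζ - ζ) (A '' S) ∧
    (∀ ζ ∈ (A '' S) ∩ S, Ainv ζ - ζ = 0) ∧
    (∀ ζ ∈ (A '' S) \ S, Ainv ζ - ζ ∉ (H : Set E)) ∧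
    IsC1DiffeoOn (fun ζ => ζ + (Ainv ζ - ζ)) (A '' S) S ∧
    IsAlmostGraphOver S (H : Set E) := by
  have smooth : ContDiffOn ℝ 1 (fun ζ => Ainv ζ - ζ) (A '' S) := hAinv.sub contDiffOn_id
  have vanishes : ∀ ζ ∈ (A '' S) ∩ S, Ainv ζ - ζ = 0 := fun ζ ⟨hζA, hζS⟩ =>
    sub_eq_zero.mpr (isFixedPt_of_leftInvOn hleft hζS (hfix ζ ⟨hAH hζA, hζS⟩))
  have avoids : ∀ ζ ∈ (A '' S) \ S, Ainv ζ - ζ ∉ (H : Set E) := fun _ ⟨hζA, hζS⟩ =>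
    sub_notMem_of_leftInvOn hleft hfix hζA (hAH hζA) hζS
  have diffeo : IsC1DiffeoOn (fun ζ => ζ + (Ainv ζ - ζ)) (A '' S) S := by
    simpa only [add_sub_cancel] using isC1DiffeoOn_image_of_leftInvOn hA hAinv hleft
  exact ⟨smooth, vanishes, avoids, diffeo,
    A '' S, fun ζ => Ainv ζ - ζ, hAH, smooth, vanishes, avoids, diffeo⟩

end

/-- Almost graph diffeomorphisms yield almost graphs (the remark in Section 1). -/
theorem statement17 {E : Type*} [NormedAddCommGroup E] [NormedSpace ℝ E]
    (X : Set E) (hX : IsC1Submanifold X) (O : Set E) (hO : IsOpen O)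
    (hne : (X ∩ O).Nonempty)
    (H : Submodule ℝ E) (hHc : IsClosed (H : Set E))
    (hQ : ∃ Q : Submodule ℝ E, IsCompl H Q ∧ IsClosed (Q : Set E))
    (A Ainv : E → E)
    (hA1 : ContDiffOn ℝ 1 A O) (hAinj : Set.InjOn A O) (hAopen : IsOpen (A '' O))
    (hAinv1 : ContDiffOn ℝ 1 Ainv (A '' O)) (hAinv2 : Set.InvOn Ainv A O (A '' O))
    (hag1 : A '' (X ∩ O) = (H : Set E) ∩ A '' O)
    (hag2 : ∀ ζ ∈ (H : Set E) ∩ (X ∩ O), A ζ = ζ) :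
    A '' (X ∩ O) = (H : Set E) ∩ A '' O ∧
    ContDiffOn ℝ 1 (fun ζ => Ainv ζ - ζ) (A '' (X ∩ O)) ∧
    (∀ ζ ∈ (A '' (X ∩ O)) ∩ (X ∩ O), Ainv ζ - ζ = 0) ∧
    (∀ ζ ∈ (A '' (X ∩ O)) \ (X ∩ O), Ainv ζ - ζ ∉ (H : Set E)) ∧
    IsC1DiffeoOn (fun ζ => ζ + (Ainv ζ - ζ)) (A '' (X ∩ O)) (X ∩ O) ∧
    IsAlmostGraphOver (X ∩ O) (H : Set E) :=
  ⟨hag1, statement17_general (X ∩ O) H A Ainv (hA1.mono inter_subset_right)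
    (hAinv1.mono (image_mono inter_subset_right)) (hAinv2.1.mono inter_subset_right)
    (hag1.subset.trans inter_subset_left) hag2⟩
end
end
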